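/- arXiv:1611.05224 — 6 statements merged into one kernel-verified Lean document; each statement's English description precedes it below -/
import Mathlib

section
/- Fix α ∈ [0,1) and τ ∈ (0,1), set τ̄ = 1−τ and λ_τ = (ατ − τ̄)/(1−α). Then for any nonnegative measurable functions g and f (with all relevant integrals finite), with f̂_τ := g^τ f^{τ̄}, one has the identity τ·SKL_α(g, f̂_τ) + τ̄·SLD_α(f̂_τ, f) = τ τ̄ · S_{(α, λ_τ)}(g, f). -/
/-!
The identity holds pointwise under the integral sign. Write `P = f̂ ^ (1 + α)` with
`f̂ = g ^ τ * f ^ (1 - τ)`. Where `f, g > 0`, `log (f̂ / g) = (1 - τ) (log f - log g)` and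
`log (f̂ / f) = τ (log g - log f)`, so the two logarithmic terms cancel in the combination
with weights `τ` and `1 - τ`; where `f` or `g` vanishes, `P = 0` and both terms vanish.
What remains is `(τ g ^ (1 + α) + (1 - τ) f ^ (1 + α) - P) / (1 + α)`, which is
`τ (1 - τ)` times the integrand of the S-divergence, because `A = τ (1 + α)` and
`B = (1 - τ) (1 + α)`, whence `P = f ^ B * g ^ A`.
-/

open MeasureTheory Real

noncomputable section

/-- The SKL divergence: SKL_α(g,f) = ∫ f^{1+α} log(f/g) − ∫ (f^{1+α} − g^{1+α})/(1+α). -/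
def SKL {X : Type*} [MeasurableSpace X] (μ : Measure X) (α : ℝ) (g f : X → ℝ) : ℝ :=
  (∫ x, f x ^ (1 + α) * Real.log (f x / g x) ∂μ)
    - ∫ x, (f x ^ (1 + α) - g x ^ (1 + α)) / (1 + α) ∂μ

/-- The SLD divergence: SLD_α(g,f) = ∫ g^{1+α} log(g/f) − ∫ (g^{1+α} − f^{1+α})/(1+α). -/
def SLD {X : Type*} [MeasurableSpace X] (μ : Measure X) (α : ℝ) (g f : X → ℝ) : ℝ :=
  (∫ x, g x ^ (1 + α) * Real.log (g x / f x) ∂μ)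
    - ∫ x, (g x ^ (1 + α) - f x ^ (1 + α)) / (1 + α) ∂μ

/-- The S-divergence S_{(α,λ)}(g,f) with A = 1 + λ(1−α) and B = α − λ(1−α). -/
def Sdiv {X : Type*} [MeasurableSpace X] (μ : Measure X) (α lam : ℝ) (g f : X → ℝ) : ℝ :=
  ∫ x, (f x ^ (1 + α) / (1 + lam * (1 - α))
    - ((1 + α) / ((1 + lam * (1 - α)) * (α - lam * (1 - α))))
        * f x ^ (α - lam * (1 - α)) * g x ^ (1 + lam * (1 - α))
    + g x ^ (1 + α) / (α - lam * (1 - α))) ∂μ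

/-- Cancellation of the logarithmic terms. If `a` or `b` is zero, the power in front vanishes
because its exponent `s` is nonzero. -/
lemma log_terms_cancel {a b τ s : ℝ} (ha : 0 ≤ a) (hb : 0 ≤ b) (hτ : τ ∈ Set.Ioo (0 : ℝ) 1)
    (hs : 0 < s) :
    τ * ((a ^ τ * b ^ (1 - τ)) ^ s * Real.log ((a ^ τ * b ^ (1 - τ)) / a))
      + (1 - τ) * ((a ^ τ * b ^ (1 - τ)) ^ s * Real.log ((a ^ τ * b ^ (1 - τ)) / b)) = 0 := by
  obtain ⟨h0, h1⟩ := hτ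
  rcases ha.eq_or_lt with rfl | ha
  · simp [Real.zero_rpow h0.ne', Real.zero_rpow hs.ne']
  rcases hb.eq_or_lt with rfl | hb
  · simp [Real.zero_rpow (sub_pos.2 h1).ne', Real.zero_rpow hs.ne']
  have hp := Real.rpow_pos_of_pos ha τ
  have hq := Real.rpow_pos_of_pos hb (1 - τ)
  rw [Real.log_div (mul_pos hp hq).ne' ha.ne', Real.log_div (mul_pos hp hq).ne' hb.ne',
    Real.log_mul hp.ne' hq.ne', Real.log_rpow ha, Real.log_rpow hb]
  ring

/-- with f̂_τ = g^τ f^{1−τ} and λ_τ = (ατ − (1−τ))/(1−α),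
τ·SKL_α(g,f̂_τ) + (1−τ)·SLD_α(f̂_τ,f) = τ(1−τ)·S_{(α,λ_τ)}(g,f). -/
theorem SKL_SLD_combination_eq_Sdiv
    {X : Type*} [MeasurableSpace X] (μ : Measure X) [SigmaFinite μ]
    (α τ : ℝ) (hα : α ∈ Set.Ico (0 : ℝ) 1) (hτ : τ ∈ Set.Ioo (0 : ℝ) 1)
    (g f : X → ℝ) (hgm : Measurable g) (hg0 : ∀ x, 0 ≤ g x)
    (hfm : Measurable f) (hf0 : ∀ x, 0 ≤ f x)
    -- all relevant integrals are finite
    (h1 : Integrable (fun x => (g x ^ τ * f x ^ (1 - τ)) ^ (1 + α)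
            * Real.log ((g x ^ τ * f x ^ (1 - τ)) / g x)) μ)
    (h2 : Integrable (fun x => ((g x ^ τ * f x ^ (1 - τ)) ^ (1 + α) - g x ^ (1 + α)) / (1 + α)) μ)
    (h3 : Integrable (fun x => (g x ^ τ * f x ^ (1 - τ)) ^ (1 + α)
            * Real.log ((g x ^ τ * f x ^ (1 - τ)) / f x)) μ)
    (h4 : Integrable (fun x => ((g x ^ τ * f x ^ (1 - τ)) ^ (1 + α) - f x ^ (1 + α)) / (1 + α)) μ) :
    τ * SKL μ α g (fun x => g x ^ τ * f x ^ (1 - τ))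
        + (1 - τ) * SLD μ α (fun x => g x ^ τ * f x ^ (1 - τ)) f
      = τ * (1 - τ) * Sdiv μ α ((α * τ - (1 - τ)) / (1 - α)) g f := by
  have hs : 0 < 1 + α := by linarith [hα.1]
  have hτ0 : τ ≠ 0 := hτ.1.ne'
  have hτ1 : 1 - τ ≠ 0 := (sub_pos.2 hτ.2).ne'
  have hα1 : 1 - α ≠ 0 := (sub_pos.2 hα.2).ne'
  have hA : 1 + (α * τ - (1 - τ)) / (1 - α) * (1 - α) = τ * (1 + α) := by
    rw [div_mul_cancel₀ _ hα1]; ring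
  have hB : α - (α * τ - (1 - τ)) / (1 - α) * (1 - α) = (1 - τ) * (1 + α) := by
    rw [div_mul_cancel₀ _ hα1]; ring
  unfold SKL SLD Sdiv
  rw [hA, hB, ← integral_sub h1 h2, ← integral_sub h3 h4, ← integral_const_mul,
    ← integral_const_mul, ← integral_const_mul]
  refine (integral_add ((h1.sub h2).const_mul τ) ((h3.sub h4).const_mul (1 - τ))).symm.trans ?_
  congr 1 with x
  simp only [Pi.sub_apply]
  have hlog := log_terms_cancel (hg0 x) (hf0 x) hτ hs
  have hP : (g x ^ τ * f x ^ (1 - τ)) ^ (1 + α)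
      = g x ^ (τ * (1 + α)) * f x ^ ((1 - τ) * (1 + α)) := by
    rw [Real.mul_rpow (Real.rpow_nonneg (hg0 x) _) (Real.rpow_nonneg (hf0 x) _),
      ← Real.rpow_mul (hg0 x), ← Real.rpow_mul (hf0 x)]
  have hS : τ * (1 - τ) * (f x ^ (1 + α) / (τ * (1 + α))
      - (1 + α) / (τ * (1 + α) * ((1 - τ) * (1 + α))) * f x ^ ((1 - τ) * (1 + α))
          * g x ^ (τ * (1 + α))
      + g x ^ (1 + α) / ((1 - τ) * (1 + α)))
      = (τ * g x ^ (1 + α) + (1 - τ) * f x ^ (1 + α)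
          - (g x ^ τ * f x ^ (1 - τ)) ^ (1 + α)) / (1 + α) := by
    rw [hP]
    generalize f x ^ ((1 - τ) * (1 + α)) = p
    generalize g x ^ (τ * (1 + α)) = q
    generalize f x ^ (1 + α) = u
    generalize g x ^ (1 + α) = v
    field_simp
    ring
  rw [hS]
  linear_combination hlog

end
end

section
/- Fix α ∈ [0,1], τ ∈ (0,1), and γ ∈ ℝ with γ > −1 and γ ≠ α. Then for any two densities g and f (with f > 0 μ-a.e. so that Q_{(α,γ,τ)}(g,f) is defined as an integral in [0,∞]), one has Q_{(α,γ,τ)}(g, f) ≥ 0, with Q_{(α,γ,τ)}(g, f) = 0 if and only if g = f μ-almost everywhere. That is, every such member of the generalized S-divergence family is a proper statistical divergence. -/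
/-!
With `u = g/f`, `v = u^(1+γ)` and `r = (1+α)/(1+γ)`, the bracket in `Cfun` is
`τ v^r + (1-τ) 1^r - (τ v + (1-τ))^r`, the Jensen gap of `t ↦ t^r` between `v` and `1`.
For `α > γ`, `r > 1` and the power is strictly convex; for `α < γ`, `0 < r < 1` and it is
strictly concave, and the prefactor `1/(τ(1-τ)(α-γ))` has the matching sign. Hence the integrand
is positive wherever `f > 0` and `g ≠ f` (`Cfun_pos`) and vanishes where `g = f > 0` (`Cfun_zero`), so
its integral is zero exactly when `g = f` almost everywhere.
-/

open MeasureTheory Real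
open scoped ENNReal

noncomputable section

/-- `g` is a probability density with respect to `μ`. -/
def IsDensity {X : Type*} [MeasurableSpace X] (μ : Measure X) (g : X → ℝ) : Prop :=
  Measurable g ∧ (∀ x, 0 ≤ g x) ∧ ∫ x, g x ∂μ = 1

/-- The convex generating function of the generalized S-divergence:
C_{(α,γ,τ)}(δ) = (1/(τ(1−τ)(α−γ))) [ (τ(δ+1)^{1+α} + 1−τ) − (τ(δ+1)^{1+γ} + 1−τ)^{(1+α)/(1+γ)} ]. -/
def Cfun (α γ τ : ℝ) (δ : ℝ) : ℝ :=
  (1 / (τ * (1 - τ) * (α - γ))) *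
    ((τ * (δ + 1) ^ (1 + α) + (1 - τ))
      - (τ * (δ + 1) ^ (1 + γ) + (1 - τ)) ^ ((1 + α) / (1 + γ)))

/-- The generalized S-divergence Q_{(α,γ,τ)}(g,f) = ∫ C_{(α,γ,τ)}(g/f − 1) f^{1+α} dμ,
as an integral with values in [0,∞]. -/
def Qlin {X : Type*} [MeasurableSpace X] (μ : Measure X) (α γ τ : ℝ) (g f : X → ℝ) : ℝ≥0∞ :=
  ∫⁻ x, ENNReal.ofReal (Cfun α γ τ (g x / f x - 1) * f x ^ (1 + α)) ∂μ

lemma Cfun_zero (α γ τ : ℝ) : Cfun α γ τ 0 = 0 := by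
  simp [Cfun]

/-- Strict Jensen for `t ↦ t ^ ((1 + α) / (1 + γ))` at the points `(δ + 1) ^ (1 + γ)` and `1` with
weights `τ` and `1 - τ`. -/
lemma Cfun_pos {α γ τ δ : ℝ} (hα : 0 ≤ α) (hτ : τ ∈ Set.Ioo (0 : ℝ) 1)
    (hγ : -1 < γ) (hγα : γ ≠ α) (hδ : -1 ≤ δ) (hδ0 : δ ≠ 0) : 0 < Cfun α γ τ δ := by
  obtain ⟨h0, h1⟩ := hτ
  have hp : 0 < 1 + γ := by linarith
  have hu : 0 ≤ δ + 1 := by linarith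
  have hτ' : 0 < 1 - τ := by linarith
  have hv : 0 ≤ (δ + 1) ^ (1 + γ) := rpow_nonneg hu _
  have hv1 : (δ + 1) ^ (1 + γ) ≠ 1 := by
    intro h
    have h := (rpow_left_inj hu zero_le_one hp.ne').1 (h.trans (one_rpow _).symm)
    exact hδ0 (by linarith)
  have hpow : (δ + 1) ^ (1 + α) = ((δ + 1) ^ (1 + γ)) ^ ((1 + α) / (1 + γ)) := by
    rw [← rpow_mul hu, mul_div_cancel₀ _ hp.ne']
  unfold Cfun
  rw [hpow]
  rcases lt_or_gt_of_ne hγα with h | h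
  · have hr : 1 < (1 + α) / (1 + γ) := by rw [lt_div_iff₀ hp]; linarith
    have hJ := (strictConvexOn_rpow hr).2 (Set.mem_Ici.2 hv)
      (Set.mem_Ici.2 zero_le_one) hv1 h0 hτ' (by ring)
    simp only [smul_eq_mul, mul_one, one_rpow] at hJ
    refine mul_pos (one_div_pos.2 (mul_pos (mul_pos h0 hτ') (by linarith))) (by linarith)
  · have hr : (1 + α) / (1 + γ) < 1 := by rw [div_lt_one hp]; linarith
    have hJ := (strictConcaveOn_rpow (by positivity) hr).2 (Set.mem_Ici.2 hv)
      (Set.mem_Ici.2 zero_le_one) hv1 h0 hτ' (by ring)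
    simp only [smul_eq_mul, mul_one, one_rpow] at hJ
    refine mul_pos_of_neg_of_neg
      (one_div_neg.2 (mul_neg_of_pos_of_neg (mul_pos h0 hτ') (by linarith))) (by linarith)

/-- every member of the generalized S-divergence family with α ∈ [0,1],
τ ∈ (0,1), γ > −1, γ ≠ α, is a proper statistical divergence:
Q_{(α,γ,τ)}(g,f) ≥ 0 with equality iff g = f μ-a.e. -/
theorem Qdiv_proper_divergence
    {X : Type*} [MeasurableSpace X] (μ : Measure X) [SigmaFinite μ]
    (α γ τ : ℝ) (hα : α ∈ Set.Icc (0 : ℝ) 1) (hτ : τ ∈ Set.Ioo (0 : ℝ) 1)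
    (hγ : -1 < γ) (hγα : γ ≠ α)
    (g f : X → ℝ) (hg : IsDensity μ g) (hf : IsDensity μ f)
    (hfpos : ∀ᵐ x ∂μ, 0 < f x) :
    0 ≤ Qlin μ α γ τ g f ∧ (Qlin μ α γ τ g f = 0 ↔ g =ᵐ[μ] f) := by
  refine ⟨zero_le, ?_⟩
  obtain ⟨hgm, hg0, -⟩ := hg
  have hfm := hf.1
  have hmeas : Measurable fun x =>
      ENNReal.ofReal (Cfun α γ τ (g x / f x - 1) * f x ^ (1 + α)) := by
    unfold Cfun
    fun_prop
  unfold Qlin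
  rw [lintegral_eq_zero_iff hmeas]
  constructor
  · intro h
    filter_upwards [h, hfpos] with x hx hfx
    by_contra hne
    have hδ : -1 ≤ g x / f x - 1 := by
      have := div_nonneg (hg0 x) hfx.le
      linarith
    have hδ0 : g x / f x - 1 ≠ 0 := by
      rwa [sub_ne_zero, Ne, div_eq_one_iff_eq hfx.ne']
    have hpos := mul_pos (Cfun_pos hα.1 hτ hγ hγα hδ hδ0) (rpow_pos_of_pos hfx (1 + α))
    exact (ENNReal.ofReal_pos.2 hpos).ne' hx
  · intro h
    filter_upwards [h, hfpos] with x hx hfx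
    simp [hx, div_self hfx.ne', Cfun_zero]

end
end

section
/- Fix α ∈ [0,1), τ ∈ (0,1) with τ̄ = 1−τ, and δ > −1. Then, as γ → −1 (through γ ∉ {−1, α}), the generalized S-divergence integrand converges: lim_{γ→−1} C_{(α,γ,τ)}(δ) = 1/(τ(1+α)) − (δ+1)^{τ(1+α)}/(τ τ̄ (1+α)) + (δ+1)^{1+α}/(τ̄(1+α)). The right-hand side is exactly the integrand (per unit f^{1+α}) of the S-divergence S_{(α,λ_τ)} with λ_τ = (ατ − τ̄)/(1−α), for which A = τ(1+α) and B = τ̄(1+α); hence the GSD family reduces to the S-divergence family in the limit γ → −1. -/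
/-!
With `x = δ + 1 > 0` and `s = 1 + γ → 0`, the only singular term of `Cfun` is
`(τ x ^ s + 1 - τ) ^ ((1 + α) / s) = exp ((1 + α) * (log (τ x ^ s + 1 - τ) / s))`.
The quotient in the exponent is the difference quotient at `0` of `s ↦ log (τ x ^ s + 1 - τ)`,
whose derivative there is `τ log x` (`tendsto_log_powerMean`). The term therefore tends to
`x ^ (τ (1 + α))`, and the prefactor tends to `1 / (τ (1 - τ) (1 + α))` by continuity.
-/

open Real Filter Topology

noncomputable section

/-- The power mean of `1` and `x` with weights `1 - τ` and `τ` tends, as its order `s` tends to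
`0`, to the geometric mean `x ^ τ`; here the logarithms of the means are compared.
The base equals `1` at `s = 0`, so the limit needs no restriction on the weight `τ`. -/
lemma tendsto_log_powerMean {x τ : ℝ} (hx : 0 < x) :
    Tendsto (fun s : ℝ => Real.log (τ * x ^ s + (1 - τ)) / s) (𝓝[≠] 0)
      (𝓝 (τ * Real.log x)) := by
  have h1 : HasDerivAt (fun s : ℝ => τ * x ^ s + (1 - τ)) (τ * Real.log x) 0 := by
    simpa using (((Real.hasStrictDerivAt_const_rpow hx 0).hasDerivAt).const_mul τ).add_const (1 - τ)
  have h2 : HasDerivAt (fun s : ℝ => Real.log (τ * x ^ s + (1 - τ))) (τ * Real.log x) 0 := by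
    simpa using h1.log (by simp)
  have h3 := h2.tendsto_slope_zero
  refine h3.congr fun s => ?_
  simp [div_eq_inv_mul]

/-- as γ → −1 (through γ ∉ {−1, α}), the GSD integrand C_{(α,γ,τ)}(δ)
converges to 1/(τ(1+α)) − (δ+1)^{τ(1+α)}/(τ(1−τ)(1+α)) + (δ+1)^{1+α}/((1−τ)(1+α)),
which is the S-divergence integrand with λ_τ = (ατ−(1−τ))/(1−α), for which
A = τ(1+α) and B = (1−τ)(1+α); hence the GSD family reduces to the S-divergence family. -/
theorem Cfun_tendsto_Sdiv_integrand
    (α τ δ : ℝ) (hα : α ∈ Set.Ico (0 : ℝ) 1) (hτ : τ ∈ Set.Ioo (0 : ℝ) 1) (hδ : -1 < δ) :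
    Tendsto (fun γ : ℝ => Cfun α γ τ δ) (𝓝[({-1, α} : Set ℝ)ᶜ] (-1))
      (𝓝 (1 / (τ * (1 + α)) - (δ + 1) ^ (τ * (1 + α)) / (τ * (1 - τ) * (1 + α))
        + (δ + 1) ^ (1 + α) / ((1 - τ) * (1 + α)))) ∧
    1 + ((α * τ - (1 - τ)) / (1 - α)) * (1 - α) = τ * (1 + α) ∧
    α - ((α * τ - (1 - τ)) / (1 - α)) * (1 - α) = (1 - τ) * (1 + α) := by
  obtain ⟨hα0, hα1⟩ := hα
  obtain ⟨hτ0, hτ1⟩ := hτ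
  have hx : 0 < δ + 1 := by linarith
  have h1α : (1 - α) ≠ 0 := by linarith
  have hα' : (1 + α) ≠ 0 := by linarith
  have hτ' : (1 - τ) ≠ 0 := by linarith
  refine ⟨?_, by rw [div_mul_cancel₀ _ h1α]; ring, by rw [div_mul_cancel₀ _ h1α]; ring⟩
  have hshift : Tendsto (fun γ : ℝ => 1 + γ) (𝓝[({-1, α} : Set ℝ)ᶜ] (-1)) (𝓝[≠] 0) := by
    refine tendsto_nhdsWithin_iff.2 ⟨?_, ?_⟩
    · have hc : Continuous (fun γ : ℝ => 1 + γ) := by fun_prop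
      exact (by simpa using hc.tendsto (-1) : Tendsto (fun γ : ℝ => 1 + γ) (𝓝 (-1)) (𝓝 0)).mono_left
        nhdsWithin_le_nhds
    · filter_upwards [self_mem_nhdsWithin] with γ hγ h0
      have h0' : 1 + γ = 0 := h0
      exact hγ (Or.inl (by linarith))
  have hpow : Tendsto
      (fun γ : ℝ => (τ * (δ + 1) ^ (1 + γ) + (1 - τ)) ^ ((1 + α) / (1 + γ)))
      (𝓝[({-1, α} : Set ℝ)ᶜ] (-1)) (𝓝 ((δ + 1) ^ (τ * (1 + α)))) := by
    have h := (Real.continuous_exp.tendsto _).comp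
      (((tendsto_log_powerMean (τ := τ) hx).comp hshift).mul_const (1 + α))
    rw [Real.rpow_def_of_pos hx,
      show Real.log (δ + 1) * (τ * (1 + α)) = τ * Real.log (δ + 1) * (1 + α) by ring]
    refine h.congr fun γ => ?_
    have hpos : 0 < τ * (δ + 1) ^ (1 + γ) + (1 - τ) := by
      have := mul_pos hτ0 (Real.rpow_pos_of_pos hx (1 + γ))
      linarith
    rw [Real.rpow_def_of_pos hpos]
    simp only [Function.comp_apply]
    congr 1
    ring
  have hpre : Tendsto (fun γ : ℝ => 1 / (τ * (1 - τ) * (α - γ)))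
      (𝓝[({-1, α} : Set ℝ)ᶜ] (-1)) (𝓝 (1 / (τ * (1 - τ) * (α - (-1))))) := by
    have hne : τ * (1 - τ) * (α - (-1)) ≠ 0 :=
      mul_ne_zero (mul_ne_zero hτ0.ne' hτ') (by linarith)
    have hc : ContinuousAt (fun γ : ℝ => 1 / (τ * (1 - τ) * (α - γ))) (-1) :=
      continuousAt_const.div (by fun_prop) hne
    exact hc.tendsto.mono_left nhdsWithin_le_nhds
  have hmain := hpre.mul (hpow.const_sub (τ * (δ + 1) ^ (1 + α) + (1 - τ)))
  unfold Cfun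
  convert hmain using 2
  rw [show α - (-1) = 1 + α by ring]
  field_simp
  ring

end
end

section
/- Fix α ∈ [0,1), τ ∈ (0,1) with τ̄ = 1−τ, and δ > −1. Then, as γ → α (through γ ∉ {−1, α}), the generalized S-divergence integrand converges: lim_{γ→α} C_{(α,γ,τ)}(δ) = (1/τ̄)(δ+1)^{1+α} log(δ+1) − (1/(1+α)) ( (δ+1)^{1+α}/τ̄ + 1/τ ) log( τ(δ+1)^{1+α} + τ̄ ). Consequently the limiting divergence Q_{(α,α,τ)}(g,f) = ∫ [ (g^{1+α}/τ̄) log(g/f) − (1/(1+α)) ( g^{1+α}/τ̄ + f^{1+α}/τ ) log( τ(g/f)^{1+α} + τ̄ ) ] dμ, which at α = 0 reduces to the generalized Kullback-Leibler divergence GKL_τ. -/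
/-!
Write `y = δ + 1 > 0` and `h γ = (τ y^(1+γ) + 1 - τ)^((1+α)/(1+γ))`. Since `h α = τ y^(1+α) + 1 - τ`,
`C_{(α,γ,τ)}(δ)` is `1/(τ(1-τ))` times the difference quotient `(h γ - h α)/(γ - α)`, so its limit
is `h'(α)/(τ(1-τ))`; logarithmic differentiation (`hasDerivAt_power_mean`) gives `h'(α)`.
The two integral identities hold pointwise, because `(g/f)^(1+α) f^(1+α) = g^(1+α)` for `f > 0`.
-/

open MeasureTheory Real Filter Topology

noncomputable section

/-- The limit of the GSD generating function as γ → α. -/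
def Calpha (α τ : ℝ) (δ : ℝ) : ℝ :=
  (1 / (1 - τ)) * (δ + 1) ^ (1 + α) * Real.log (δ + 1)
    - (1 / (1 + α)) * ((δ + 1) ^ (1 + α) / (1 - τ) + 1 / τ)
        * Real.log (τ * (δ + 1) ^ (1 + α) + (1 - τ))

/-- The generalized Kullback-Leibler divergence GKL_τ(g,f). -/
def GKL {X : Type*} [MeasurableSpace X] (μ : Measure X) (τ : ℝ) (g f : X → ℝ) : ℝ :=
  ∫ x, (g x / (1 - τ) * Real.log (g x / f x)
    - (g x / (1 - τ) + f x / τ) * Real.log (τ * (g x / f x) + (1 - τ))) ∂μ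

/-- The derivative at `γ = α` of the `γ`-dependent term of `Cfun`. The outer exponent equals `1` at
`γ = α`, which is why no power of the base survives in the value. -/
lemma hasDerivAt_power_mean {α τ y : ℝ} (hα : 0 ≤ α) (hτ : τ ∈ Set.Ioo (0 : ℝ) 1) (hy : 0 < y) :
    HasDerivAt (fun γ : ℝ => (τ * y ^ (1 + γ) + (1 - τ)) ^ ((1 + α) / (1 + γ)))
      (τ * y ^ (1 + α) * Real.log y
        - (1 / (1 + α)) * (τ * y ^ (1 + α) + (1 - τ)) * Real.log (τ * y ^ (1 + α) + (1 - τ))) α := by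
  have h1 : (1 + α) ≠ 0 := by linarith
  have hu : 0 < τ * y ^ (1 + α) + (1 - τ) :=
    add_pos (mul_pos hτ.1 (Real.rpow_pos_of_pos hy _)) (sub_pos.2 hτ.2)
  have hlin : HasDerivAt (fun γ : ℝ => 1 + γ) 1 α := (hasDerivAt_id α).const_add 1
  have hbase : HasDerivAt (fun γ : ℝ => τ * y ^ (1 + γ) + (1 - τ))
      (τ * (Real.log y * 1 * y ^ (1 + α))) α :=
    ((hlin.const_rpow hy).const_mul τ).add_const (1 - τ)
  have hexp : HasDerivAt (fun γ : ℝ => (1 + α) / (1 + γ))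
      ((0 * (1 + α) - (1 + α) * 1) / (1 + α) ^ 2) α :=
    (hasDerivAt_const α (1 + α)).div hlin h1
  convert hbase.rpow hexp hu using 1
  rw [div_self h1, sub_self, Real.rpow_zero, Real.rpow_one]
  field_simp
  ring

/-- The limit `γ → α` of the generating function, at any `y = δ + 1 > 0`. -/
lemma tendsto_Cfun {α τ δ : ℝ} (hα : 0 ≤ α) (hτ : τ ∈ Set.Ioo (0 : ℝ) 1) (hδ : -1 < δ) :
    Tendsto (fun γ : ℝ => Cfun α γ τ δ) (𝓝[≠] α) (𝓝 (Calpha α τ δ)) := by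
  have h1 : (1 + α) ≠ 0 := by linarith
  have hτ0 : τ ≠ 0 := hτ.1.ne'
  have hτ1 : 1 - τ ≠ 0 := (sub_pos.2 hτ.2).ne'
  have h := ((hasDerivAt_power_mean hα hτ (show 0 < δ + 1 by linarith)).tendsto_slope).const_mul
    (1 / (τ * (1 - τ)))
  have hval : Calpha α τ δ = 1 / (τ * (1 - τ)) * (τ * (δ + 1) ^ (1 + α) * Real.log (δ + 1)
      - (1 / (1 + α)) * (τ * (δ + 1) ^ (1 + α) + (1 - τ))
        * Real.log (τ * (δ + 1) ^ (1 + α) + (1 - τ))) := by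
    unfold Calpha
    field_simp
  rw [hval]
  refine h.congr' ?_
  filter_upwards [self_mem_nhdsWithin] with γ hγ
  have hγ' : γ - α ≠ 0 := sub_ne_zero.2 hγ
  have hγ'' : α - γ ≠ 0 := sub_ne_zero.2 (Ne.symm hγ)
  rw [slope_def_field, Cfun, div_self h1, Real.rpow_one, ← neg_sub γ α]
  field_simp
  ring

lemma Calpha_mul_rpow {α τ a b : ℝ} (ha : 0 ≤ a) (hb : 0 < b) :
    Calpha α τ (a / b - 1) * b ^ (1 + α)
      = a ^ (1 + α) / (1 - τ) * Real.log (a / b)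
          - (1 / (1 + α)) * (a ^ (1 + α) / (1 - τ) + b ^ (1 + α) / τ)
              * Real.log (τ * (a / b) ^ (1 + α) + (1 - τ)) := by
  have hmul : (a / b) ^ (1 + α) * b ^ (1 + α) = a ^ (1 + α) := by
    rw [← Real.mul_rpow (div_nonneg ha hb.le) hb.le, div_mul_cancel₀ _ hb.ne']
  rw [Calpha, sub_add_cancel, ← hmul]
  ring

/-- as γ → α (through γ ∉ {−1, α}), the GSD integrand converges to
(1/(1−τ))(δ+1)^{1+α} log(δ+1) − (1/(1+α))((δ+1)^{1+α}/(1−τ) + 1/τ) log(τ(δ+1)^{1+α} + 1−τ);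
consequently Q_{(α,α,τ)}(g,f) = ∫ [ (g^{1+α}/(1−τ)) log(g/f)
− (1/(1+α))(g^{1+α}/(1−τ) + f^{1+α}/τ) log(τ(g/f)^{1+α} + 1−τ) ] dμ,
which reduces to the GKL divergence at α = 0. -/
theorem Cfun_tendsto_GKL_type
    {X : Type*} [MeasurableSpace X] (μ : Measure X) [SigmaFinite μ]
    (α τ δ : ℝ) (hα : α ∈ Set.Ico (0 : ℝ) 1) (hτ : τ ∈ Set.Ioo (0 : ℝ) 1) (hδ : -1 < δ)
    (g f : X → ℝ) (hgm : Measurable g) (hg0 : ∀ x, 0 ≤ g x)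
    (hfm : Measurable f) (hf0 : ∀ x, 0 < f x) :
    Tendsto (fun γ : ℝ => Cfun α γ τ δ) (𝓝[({-1, α} : Set ℝ)ᶜ] α) (𝓝 (Calpha α τ δ)) ∧
    (∫ x, Calpha α τ (g x / f x - 1) * f x ^ (1 + α) ∂μ
      = ∫ x, (g x ^ (1 + α) / (1 - τ) * Real.log (g x / f x)
          - (1 / (1 + α)) * (g x ^ (1 + α) / (1 - τ) + f x ^ (1 + α) / τ)
              * Real.log (τ * (g x / f x) ^ (1 + α) + (1 - τ))) ∂μ) ∧
    (α = 0 → ∫ x, Calpha α τ (g x / f x - 1) * f x ^ (1 + α) ∂μ = GKL μ τ g f) := by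
  have hint : ∫ x, Calpha α τ (g x / f x - 1) * f x ^ (1 + α) ∂μ
      = ∫ x, (g x ^ (1 + α) / (1 - τ) * Real.log (g x / f x)
          - (1 / (1 + α)) * (g x ^ (1 + α) / (1 - τ) + f x ^ (1 + α) / τ)
              * Real.log (τ * (g x / f x) ^ (1 + α) + (1 - τ))) ∂μ :=
    integral_congr_ae (Eventually.of_forall fun x => Calpha_mul_rpow (hg0 x) (hf0 x))
  refine ⟨(tendsto_Cfun hα.1 hτ hδ).mono_left (nhdsWithin_mono α ?_), hint, ?_⟩
  · exact Set.compl_subset_compl.2 (Set.singleton_subset_iff.2 (Set.mem_insert_of_mem _ rfl))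
  · rintro rfl
    rw [hint, GKL]
    simp only [add_zero, Real.rpow_one, div_one, one_mul]

end
end

section
/- Fix α ∈ [0,1], τ ∈ (0,1), and γ ∈ ℝ with γ > −1 and γ ≠ α. Let Θ ⊂ ℝ^p be compact and let {f_θ : θ ∈ Θ} be a family of densities, each positive μ-a.e., such that for μ-almost all x the map θ ↦ f_θ(x) is continuous on Θ, and such that there exists a μ-integrable function h with C_{(α,γ,τ)}(g(x)/f_θ(x) − 1) · f_θ(x)^{1+α} ≤ h(x) for all θ ∈ Θ and μ-almost all x. Then for every density g the minimum GSD functional exists: there is a θ* ∈ Θ attaining min_{θ ∈ Θ} Q_{(α,γ,τ)}(g, f_θ). -/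
/-!
The map `θ ↦ Q(g, f_θ)` is continuous on the compact set `Θ`, hence attains its minimum. At a
given `θ₀ ∈ Θ` the integrand is, for almost every `x`, continuous in `θ`: `f_{θ₀}(x) > 0` makes
`g(x) / f_θ(x)` continuous at `θ₀`, and `Cfun` is continuous at every `δ ≥ -1`
(`continuousAt_Cfun`) because the exponents `1 + α`, `1 + γ` are positive and the base of the
outer power is at least `1 - τ > 0`. Dominated convergence, with dominating function `h`, then
moves the limit through the integral.
-/

open MeasureTheory Real
open scoped ENNReal

noncomputable section

lemma continuousAt_Cfun {α γ τ δ : ℝ} (hα : 0 < 1 + α) (hγ : 0 < 1 + γ)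
    (hτ : τ ∈ Set.Ioo (0 : ℝ) 1) (hδ : -1 ≤ δ) : ContinuousAt (Cfun α γ τ) δ := by
  have hshift : ContinuousAt (fun d : ℝ => d + 1) δ := by fun_prop
  have hα' : ContinuousAt (fun d : ℝ => (d + 1) ^ (1 + α)) δ :=
    hshift.rpow_const (Or.inr hα.le)
  have hγ' : ContinuousAt (fun d : ℝ => (d + 1) ^ (1 + γ)) δ :=
    hshift.rpow_const (Or.inr hγ.le)
  have hbase : τ * (δ + 1) ^ (1 + γ) + (1 - τ) ≠ 0 := by
    have h1 : 0 ≤ τ * (δ + 1) ^ (1 + γ) :=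
      mul_nonneg hτ.1.le (Real.rpow_nonneg (by linarith) _)
    linarith [hτ.2]
  exact continuousAt_const.mul
    (((continuousAt_const.mul hα').add continuousAt_const).sub
      (((continuousAt_const.mul hγ').add continuousAt_const).rpow_const (Or.inl hbase)))

lemma measurable_Cfun (α γ τ : ℝ) : Measurable (Cfun α γ τ) := by
  unfold Cfun
  fun_prop

/-- on a compact parameter space Θ ⊂ ℝ^p, with θ ↦ f_θ(x) continuous
for a.e. x and a μ-integrable dominating function for the GSD integrand,
the minimum GSD functional exists for every density g. -/
theorem minimum_GSD_functional_exists
    {X : Type*} [MeasurableSpace X] (μ : Measure X) [SigmaFinite μ]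
    (α γ τ : ℝ) (hα : α ∈ Set.Icc (0 : ℝ) 1) (hτ : τ ∈ Set.Ioo (0 : ℝ) 1)
    (hγ : -1 < γ) (hγα : γ ≠ α)
    (p : ℕ) (Θ : Set (Fin p → ℝ)) (hΘc : IsCompact Θ) (hΘne : Θ.Nonempty)
    (f : (Fin p → ℝ) → X → ℝ)
    (hdens : ∀ θ ∈ Θ, IsDensity μ (f θ))
    (hpos : ∀ θ ∈ Θ, ∀ᵐ x ∂μ, 0 < f θ x)
    (g : X → ℝ) (hg : IsDensity μ g)
    (hcont : ∀ᵐ x ∂μ, ContinuousOn (fun θ => f θ x) Θ)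
    (h : X → ℝ) (hint : Integrable h μ)
    (hdom : ∀ θ ∈ Θ, ∀ᵐ x ∂μ, Cfun α γ τ (g x / f θ x - 1) * f θ x ^ (1 + α) ≤ h x) :
    ∃ θs ∈ Θ, ∀ θ ∈ Θ, Qlin μ α γ τ g (f θs) ≤ Qlin μ α γ τ g (f θ) := by
  have hα1 : 0 < 1 + α := by linarith [hα.1]
  have hγ1 : 0 < 1 + γ := by linarith
  have hQ : ContinuousOn (fun θ => Qlin μ α γ τ g (f θ)) Θ := by
    intro θ₀ hθ₀
    refine tendsto_lintegral_filter_of_dominated_convergence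
      (fun x => ENNReal.ofReal (h x)) ?_ ?_ hint.lintegral_lt_top.ne ?_
    · filter_upwards [self_mem_nhdsWithin] with θ hθ
      have hf : Measurable (f θ) := (hdens θ hθ).1
      exact (((measurable_Cfun α γ τ).comp ((hg.1.div hf).sub_const 1)).mul
        (hf.pow_const (1 + α))).ennreal_ofReal
    · filter_upwards [self_mem_nhdsWithin] with θ hθ
      filter_upwards [hdom θ hθ] with x hx
      exact ENNReal.ofReal_le_ofReal hx
    · filter_upwards [hcont, hpos θ₀ hθ₀] with x hx hx0
      have hfx : ContinuousWithinAt (fun θ => f θ x) Θ θ₀ := hx θ₀ hθ₀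
      have hδ : -1 ≤ g x / f θ₀ x - 1 := by
        linarith [div_nonneg (hg.2.1 x) hx0.le]
      have hratio : ContinuousWithinAt (fun θ => g x / f θ x - 1) Θ θ₀ :=
        (continuousWithinAt_const.div hfx hx0.ne').sub continuousWithinAt_const
      have hC : ContinuousWithinAt (fun θ => Cfun α γ τ (g x / f θ x - 1)) Θ θ₀ :=
        (continuousAt_Cfun hα1 hγ1 hτ hδ).comp_continuousWithinAt
          (f := fun θ => g x / f θ x - 1) hratio
      exact ENNReal.tendsto_ofReal (hC.mul (hfx.rpow_const (Or.inr hα1.le)))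
  exact hΘc.exists_isMinOn hΘne hQ

end
end

section
/- Fix α ∈ [0,1], τ ∈ (0,1), and γ ∈ ℝ with γ ≠ −1 and γ ≠ α. Let g_X and f_X be densities on ℝ^d (with respect to Lebesgue measure), let U be an invertible d×d real matrix and v ∈ ℝ^d, and let g_Y and f_Y be the densities of Y = UX + v, i.e., g_Y(y) = g_X(U^{−1}(y−v)) |det U|^{−1} and f_Y(y) = f_X(U^{−1}(y−v)) |det U|^{−1}. Then Q_{(α,γ,τ)}(g_Y, f_Y) = k · Q_{(α,γ,τ)}(g_X, f_X) with the constant k = |det U|^{−α} > 0 depending only on U and α. Thus the generalized S-divergence is not itself affine invariant (unless α = 0), but affine transformations rescale it by a positive constant, so the corresponding minimum divergence estimator is affine equivariant. -/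
/-! The integrand of `Qlin` depends on `g, f` only through `g / f` and the factor `f ^ (1 + α)`, so
multiplying both densities by `|det U|⁻¹` multiplies it by `|det U| ^ (-(1 + α))`
(`Cfun_integrand_scale`). The substitution `x = U⁻¹ (y - v)` contributes the Jacobian `|det U|`
(`lintegral_affine`), which leaves the factor `|det U| ^ (-α)`. -/

open MeasureTheory Real
open scoped ENNReal

noncomputable section

/-- The integrand of the divergence is homogeneous of degree `1 + α` under a common positive
rescaling of both densities, since it sees `g` only through the ratio `g / f`. Where `b = 0` both
sides agree because the quotients take the junk value `0` on both sides. -/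
lemma Cfun_integrand_scale (α γ τ a b : ℝ) (hb : 0 ≤ b) {c : ℝ} (hc : 0 < c) :
    Cfun α γ τ (a * c / (b * c) - 1) * (b * c) ^ (1 + α)
      = c ^ (1 + α) * (Cfun α γ τ (a / b - 1) * b ^ (1 + α)) := by
  rw [mul_div_mul_right _ _ hc.ne', Real.mul_rpow hb hc.le]
  ring

/-- Change of variables `x = U⁻¹ (y - v)`, which contributes the Jacobian factor `|det U|`. -/
lemma lintegral_affine (d : ℕ) (U : Matrix (Fin d) (Fin d) ℝ) (hU : IsUnit U.det)
    (v : Fin d → ℝ) {F : (Fin d → ℝ) → ℝ≥0∞} (hF : Measurable F) :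
    ∫⁻ y, F (U⁻¹.mulVec (y - v)) = ENNReal.ofReal |U.det| * ∫⁻ x, F x := by
  have hdet : U⁻¹.det = U.det⁻¹ := by
    rw [Matrix.det_nonsing_inv, Ring.inverse_eq_inv']
  have hmap := Real.map_matrix_volume_pi_eq_smul_volume_pi (M := U⁻¹)
    (by rw [hdet]; exact inv_ne_zero hU.ne_zero)
  rw [hdet, inv_inv] at hmap
  have hmeas : Measurable (Matrix.toLin' U⁻¹) :=
    (Matrix.toLin' U⁻¹).continuous_of_finiteDimensional.measurable
  rw [lintegral_sub_right_eq_self (fun y => F (U⁻¹.mulVec y)) v, ← smul_eq_mul,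
    ← lintegral_smul_measure, ← hmap, lintegral_map hF hmeas]
  simp only [Matrix.toLin'_apply]

/-- under the affine transformation Y = UX + v the generalized S-divergence
rescales by the positive constant k = |det U|^{−α}: Q(g_Y,f_Y) = k·Q(g_X,f_X); thus the
minimum GSD estimator is affine equivariant. -/
theorem Qdiv_affine_equivariance
    (d : ℕ) (α γ τ : ℝ) (hα : α ∈ Set.Icc (0 : ℝ) 1) (hτ : τ ∈ Set.Ioo (0 : ℝ) 1)
    (hγ1 : γ ≠ -1) (hγ2 : γ ≠ α)
    (gX fX gY fY : (Fin d → ℝ) → ℝ)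
    (hgX : IsDensity (volume : Measure (Fin d → ℝ)) gX)
    (hfX : IsDensity (volume : Measure (Fin d → ℝ)) fX)
    (U : Matrix (Fin d) (Fin d) ℝ) (hU : IsUnit U.det) (v : Fin d → ℝ)
    (hgY : ∀ y, gY y = gX (U⁻¹.mulVec (y - v)) * |U.det|⁻¹)
    (hfY : ∀ y, fY y = fX (U⁻¹.mulVec (y - v)) * |U.det|⁻¹) :
    0 < |U.det| ^ (-α) ∧
    Qlin (volume : Measure (Fin d → ℝ)) α γ τ gY fY
      = ENNReal.ofReal (|U.det| ^ (-α)) * Qlin (volume : Measure (Fin d → ℝ)) α γ τ gX fX := by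
  have hD : 0 < |U.det| := abs_pos.mpr hU.ne_zero
  refine ⟨Real.rpow_pos_of_pos hD _, ?_⟩
  have hF : Measurable fun x =>
      ENNReal.ofReal (Cfun α γ τ (gX x / fX x - 1) * fX x ^ (1 + α)) := by
    have hg := hgX.1
    have hf := hfX.1
    unfold Cfun
    fun_prop
  have hpow : (|U.det|⁻¹) ^ (1 + α) * |U.det| = |U.det| ^ (-α) := by
    rw [Real.inv_rpow hD.le, ← Real.rpow_neg hD.le]
    nth_rewrite 2 [← Real.rpow_one |U.det|]
    rw [← Real.rpow_add hD]
    congr 1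
    ring
  have hc : 0 ≤ (|U.det|⁻¹) ^ (1 + α) := by positivity
  unfold Qlin
  simp only [hgY, hfY]
  simp_rw [fun y => Cfun_integrand_scale α γ τ (gX (U⁻¹.mulVec (y - v)))
    (fX (U⁻¹.mulVec (y - v))) (hfX.2.1 _) (inv_pos.mpr hD), ENNReal.ofReal_mul hc]
  rw [lintegral_const_mul' _ _ ENNReal.ofReal_ne_top, lintegral_affine d U hU v hF, ← mul_assoc,
    ← ENNReal.ofReal_mul hc, hpow]

end
end
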